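/- Let u_1, …, u_N be vectors in a real inner product space spanning a subspace of dimension at most N, let X be the N×N Gram matrix X_{ij} = ⟨u_i, u_j⟩ with eigenvalues λ_1 ≥ λ_2 ≥ … ≥ λ_N ≥ 0 and an orthogonal matrix Q of corresponding eigenvectors, and fix 1 ≤ M ≤ N. Define, for each i with λ_i > 0, the POD modes φ_i = λ_i^{-1/2} Σ_j Q_{ji} u_j. Then the POD modes φ_1, …, φ_M (assuming λ_M > 0) achieve reconstruction error Σ_{i=1}^{N} ‖u_i − Σ_{k=1}^{M} ⟨u_i, φ_k⟩ φ_k‖² = Σ_{k=M+1}^{N} λ_k, i.e., the error of projecting the snapshots onto the span of the first M POD modes equals the sum of the discarded eigenvalues of the Gram matrix. -/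

import Mathlib

open scoped RealInnerProductSpace BigOperators
open Matrix

/-- The rank-`M` POD truncation built from the decreasingly ordered eigenpairs of the
Gram matrix of the snapshots achieves reconstruction error equal to the sum of the
discarded eigenvalues: `Σᵢ ‖uᵢ − Σ_{k<M} ⟪uᵢ, φₖ⟫ φₖ‖² = Σ_{k≥M} λₖ`. -/
theorem pod_truncation_error_eq_sum_discarded_eigenvalues
    {E : Type*} [NormedAddCommGroup E] [InnerProductSpace ℝ E]
    (N M : ℕ) (hM1 : 1 ≤ M) (hMN : M ≤ N)
    (u : Fin N → E)
    (X : Matrix (Fin N) (Fin N) ℝ)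
    (hX : ∀ i j, X i j = ⟪u i, u j⟫)
    (lam : Fin N → ℝ)
    (hnonneg : ∀ i, 0 ≤ lam i)
    (hsorted : ∀ i j : Fin N, i ≤ j → lam j ≤ lam i)
    (Q : Matrix (Fin N) (Fin N) ℝ)
    (hQ : Qᵀ * Q = 1)
    (heig : ∀ i, X.mulVec (fun j => Q j i) = fun j => lam i * Q j i)
    (φ : Fin N → E)
    (hφ : ∀ i, 0 < lam i → φ i = (Real.sqrt (lam i))⁻¹ • ∑ j, Q j i • u j)
    (hlamM : 0 < lam ⟨M - 1, by omega⟩) :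
    ∑ i, ‖u i - ∑ k ∈ Finset.univ.filter (fun k : Fin N => (k : ℕ) < M),
        ⟪u i, φ k⟫ • φ k‖ ^ 2
      = ∑ k ∈ Finset.univ.filter (fun k : Fin N => M ≤ (k : ℕ)), lam k := by
  have hpos : ∀ k : Fin N, (k : ℕ) < M → 0 < lam k := fun k hk =>
    lt_of_lt_of_le hlamM (hsorted k ⟨M - 1, by omega⟩ (by rw [Fin.le_def]; simp only; omega))
  have horth : ∀ k l, ∑ i, Q i k * Q i l = if k = l then 1 else 0 := by
    intro k l
    have h := congrFun (congrFun hQ k) l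
    simpa [Matrix.mul_apply, Matrix.one_apply] using h
  have hXQ : ∀ i k, ∑ j, X i j * Q j k = lam k * Q i k := by
    intro i k
    have h := congrFun (heig k) i
    simpa [Matrix.mulVec, dotProduct] using h
  have hinner : ∀ (i k : Fin N), (k : ℕ) < M → ⟪u i, φ k⟫ = Real.sqrt (lam k) * Q i k := by
    intro i k hk
    have hp := hpos k hk
    have hs : Real.sqrt (lam k) ≠ 0 := (Real.sqrt_pos.mpr hp).ne'
    rw [hφ k hp, inner_smul_right, inner_sum]
    have : ∑ j, ⟪u i, Q j k • u j⟫ = lam k * Q i k := by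
      rw [← hXQ i k]
      refine Finset.sum_congr rfl fun j _ => ?_
      rw [inner_smul_right, hX, mul_comm]
    rw [this]
    nth_rewrite 2 [← Real.mul_self_sqrt hp.le]
    field_simp
  have hon : ∀ k l : Fin N, (k : ℕ) < M → (l : ℕ) < M →
      ⟪φ k, φ l⟫ = if k = l then (1 : ℝ) else 0 := by
    intro k l hk hl
    have hp := hpos k hk
    have hs : Real.sqrt (lam k) ≠ 0 := (Real.sqrt_pos.mpr hp).ne'
    rw [hφ k hp, real_inner_smul_left, sum_inner]
    have : ∑ j, ⟪Q j k • u j, φ l⟫ = Real.sqrt (lam l) * ∑ j, Q j k * Q j l := by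
      rw [Finset.mul_sum]
      refine Finset.sum_congr rfl fun j _ => ?_
      rw [real_inner_smul_left, hinner j l hl]
      ring
    rw [this, horth]
    split_ifs with h
    · subst h
      field_simp
    · simp
  have hnorm : ∀ i, ‖u i - ∑ k ∈ Finset.univ.filter (fun k : Fin N => (k : ℕ) < M),
        ⟪u i, φ k⟫ • φ k‖ ^ 2
      = X i i - ∑ k ∈ Finset.univ.filter (fun k : Fin N => (k : ℕ) < M),
        lam k * (Q i k * Q i k) := by
    intro i
    have h1 : ∀ k ∈ Finset.univ.filter (fun k : Fin N => (k : ℕ) < M),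
        ⟪u i, φ k⟫ * ⟪u i, φ k⟫ = lam k * (Q i k * Q i k) := by
      intro k hk
      have hk' := (Finset.mem_filter.mp hk).2
      rw [hinner i k hk']
      nth_rewrite 3 [← Real.mul_self_sqrt (hnonneg k)]
      ring
    rw [← Finset.sum_congr rfl h1, norm_sub_sq_real, ← real_inner_self_eq_norm_sq,
      ← real_inner_self_eq_norm_sq, hX]
    have h2 : ⟪u i, ∑ k ∈ Finset.univ.filter (fun k : Fin N => (k : ℕ) < M),
        ⟪u i, φ k⟫ • φ k⟫ = ∑ k ∈ Finset.univ.filter (fun k : Fin N => (k : ℕ) < M),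
        ⟪u i, φ k⟫ * ⟪u i, φ k⟫ := by
      rw [inner_sum]
      exact Finset.sum_congr rfl fun k _ => by rw [inner_smul_right]
    have h3 : ⟪∑ k ∈ Finset.univ.filter (fun k : Fin N => (k : ℕ) < M), ⟪u i, φ k⟫ • φ k,
        ∑ k ∈ Finset.univ.filter (fun k : Fin N => (k : ℕ) < M), ⟪u i, φ k⟫ • φ k⟫
        = ∑ k ∈ Finset.univ.filter (fun k : Fin N => (k : ℕ) < M),
        ⟪u i, φ k⟫ * ⟪u i, φ k⟫ := by
      rw [sum_inner]
      refine Finset.sum_congr rfl fun k hk => ?_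
      have hk' := (Finset.mem_filter.mp hk).2
      rw [real_inner_smul_left, inner_sum]
      congr 1
      rw [Finset.sum_eq_single_of_mem k hk]
      · rw [inner_smul_right, hon k k hk' hk']; simp
      · intro l hl hlk
        rw [inner_smul_right, hon k l hk' (Finset.mem_filter.mp hl).2, if_neg (Ne.symm hlk),
          mul_zero]
    rw [h2, h3]
    ring
  have hQ2 : Q * Qᵀ = 1 := mul_eq_one_comm.mp hQ
  have htr : ∑ i, X i i = ∑ k, lam k := by
    have h1 : X.trace = (Qᵀ * (X * Q)).trace := by
      rw [Matrix.trace_mul_comm, Matrix.mul_assoc, hQ2, Matrix.mul_one]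
    have h2 : (Qᵀ * (X * Q)).trace = ∑ k, lam k := by
      refine Finset.sum_congr rfl fun k _ => ?_
      rw [Matrix.diag_apply, Matrix.mul_apply]
      simp only [Matrix.mul_apply, hXQ, Matrix.transpose_apply]
      have h := horth k k
      rw [if_pos rfl] at h
      have h' : ∑ j, Q j k * (lam k * Q j k) = lam k * ∑ j, Q j k * Q j k := by
        rw [Finset.mul_sum]
        exact Finset.sum_congr rfl fun j _ => by ring
      rw [h', h, mul_one]
    exact h1.trans h2
  have hsplit := Finset.sum_filter_add_sum_filter_not Finset.univ
    (fun k : Fin N => (k : ℕ) < M) lam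
  simp only [not_lt] at hsplit
  rw [Finset.sum_congr rfl fun i _ => hnorm i, Finset.sum_sub_distrib, htr, Finset.sum_comm]
  have : ∑ k ∈ Finset.univ.filter (fun k : Fin N => (k : ℕ) < M),
      ∑ i, lam k * (Q i k * Q i k)
      = ∑ k ∈ Finset.univ.filter (fun k : Fin N => (k : ℕ) < M), lam k := by
    refine Finset.sum_congr rfl fun k _ => ?_
    rw [← Finset.mul_sum, horth, if_pos rfl, mul_one]
  rw [this]
  linarith
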